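/- Let α > 0, let V : ℝ → ℝ be differentiable, let ξ : [0, ∞) → ℝ be continuous, and let Z : [0, ∞) → ℝ be differentiable with Z'(t) = -α Z(t) + ξ(t). Suppose Q : [0, ∞) → ℝ is twice differentiable and satisfies the integro-differential equation Q''(t) + V'(Q(t)) + ∫₀^t e^{-α(t-s)} Q'(s) ds = Z(t) for all t ≥ 0. Define P := Q' and S(t) := Q''(t) + V'(Q(t)). Then S(0) = Z(0), P'(t) = S(t) - V'(Q(t)), and S is differentiable with S'(t) = -α S(t) - P(t) + ξ(t) for all t ≥ 0. -/

import Mathlib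

open Real Set

/-- From the integro-differential equation
`Q''(t) + V'(Q(t)) + ∫₀^t e^{-α(t-s)} Q'(s) ds = Z(t)` (with `Z' = -αZ + ξ`),
the variables `P := Q'` and `S := Q'' + V'(Q)` satisfy the augmented Markovian
system: `S(0) = Z(0)`, `P' = S - V'(Q)`, and `S' = -αS - P + ξ` on `[0, ∞)`. -/
theorem integro_differential_implies_augmented_system (α : ℝ) (hα : 0 < α)
    (V : ℝ → ℝ) (hV : Differentiable ℝ V) (ξ Z Q : ℝ → ℝ)
    (hξ : ContinuousOn ξ (Ici 0))
    (hZ : ∀ t ∈ Ici (0:ℝ), HasDerivWithinAt Z (-α * Z t + ξ t) (Ici 0) t)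
    (hQ : ∀ t ∈ Ici (0:ℝ), DifferentiableWithinAt ℝ Q (Ici 0) t)
    (hQ' : ∀ t ∈ Ici (0:ℝ), DifferentiableWithinAt ℝ (derivWithin Q (Ici 0)) (Ici 0) t)
    (heq : ∀ t ∈ Ici (0:ℝ),
      derivWithin (derivWithin Q (Ici 0)) (Ici 0) t + deriv V (Q t) +
          (∫ s in (0:ℝ)..t, Real.exp (-α * (t - s)) * derivWithin Q (Ici 0) s) = Z t)
    (P S : ℝ → ℝ)
    (hPdef : ∀ t, P t = derivWithin Q (Ici 0) t)
    (hSdef : ∀ t, S t = derivWithin (derivWithin Q (Ici 0)) (Ici 0) t + deriv V (Q t)) :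
    S 0 = Z 0 ∧
    (∀ t ∈ Ici (0:ℝ), HasDerivWithinAt P (S t - deriv V (Q t)) (Ici 0) t) ∧
    ∀ t ∈ Ici (0:ℝ), HasDerivWithinAt S (-α * S t - P t + ξ t) (Ici 0) t := by
  have hPfun : P = derivWithin Q (Ici 0) := funext hPdef
  rw [← hPfun] at hQ' heq hSdef
  have hPc : ContinuousOn P (Ici 0) := fun t ht => (hQ' t ht).continuousWithinAt
  have hpc : Continuous (fun s : ℝ => P (max s 0)) :=
    hPc.comp_continuous (by fun_prop) (fun s => le_max_right s 0)
  have hg : Continuous (fun s : ℝ => Real.exp (α * s) * P (max s 0)) := by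
    exact (by fun_prop : Continuous (fun s : ℝ => Real.exp (α * s))).mul hpc
  have hI : ∀ t ∈ Ici (0:ℝ), (∫ s in (0:ℝ)..t, Real.exp (-α * (t - s)) * P s) =
      Real.exp (-α * t) * ∫ s in (0:ℝ)..t, Real.exp (α * s) * P (max s 0) := by
    intro t ht
    rw [← intervalIntegral.integral_const_mul]
    apply intervalIntegral.integral_congr
    intro s hs
    rw [uIcc_of_le ht] at hs
    simp only
    rw [max_eq_left hs.1, ← mul_assoc, ← Real.exp_add]
    congr 2
    ring
  have hS : ∀ t ∈ Ici (0:ℝ), S t = Z t -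
      Real.exp (-α * t) * ∫ s in (0:ℝ)..t, Real.exp (α * s) * P (max s 0) := by
    intro t ht
    rw [← hI t ht, hSdef, ← heq t ht]
    ring
  refine ⟨?_, ?_, ?_⟩
  · simpa using hS 0 self_mem_Ici
  · intro t ht
    have h := (hQ' t ht).hasDerivWithinAt
    rw [hSdef]
    simpa using h
  · intro t ht
    have h1 : HasDerivAt (fun t => ∫ s in (0:ℝ)..t, Real.exp (α * s) * P (max s 0))
        (Real.exp (α * t) * P (max t 0)) t :=
      intervalIntegral.integral_hasDerivAt_right (hg.intervalIntegrable _ _)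
        (hg.stronglyMeasurableAtFilter _ _) hg.continuousAt
    have h2 : HasDerivAt (fun t => Real.exp (-α * t)) (Real.exp (-α * t) * (-α)) t := by
      simpa using ((hasDerivAt_id t).const_mul (-α)).exp
    have h3 := (hZ t ht).sub (h2.mul h1).hasDerivWithinAt
    refine (h3.congr_of_mem (fun x hx => hS x hx) ht).congr_deriv ?_
    have he : Real.exp (-α * t) * Real.exp (α * t) = 1 := by
      rw [← Real.exp_add]; simp
    rw [hS t ht, max_eq_left ht]
    linear_combination (-P t) * he
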